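/- Let x, y be real numbers with 0 < x < 1 and suppose that ζ(x+iy) = 0, where ζ is the Riemann zeta function. Then for every odd positive integer q, the series Σ_{m=1}^∞ (−1)^{mq−1} (mq)^{−x} cos(y·log(mq)) converges to 0 and the series Σ_{m=1}^∞ (−1)^{mq−1} (mq)^{−x} sin(y·log(mq)) converges to 0. -/

import Mathlib

/-!
Write `s = x + iy` and pair consecutive terms of the Dirichlet eta series
`∑ (-1) ^ (m - 1) m ^ (-s)`. By the mean value inequality the `k`-th pair
`(2k+1) ^ (-s) - (2k+2) ^ (-s)` is at most `‖s‖ (k+1) ^ (-re s - 1)` in norm, so the paired series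
converges locally uniformly on `re s > 0` and is holomorphic there. For `re s > 1` it equals
`(1 - 2 * 2 ^ (-s)) ζ(s)` (`etaPair_tsum_of_one_lt_re`), and the identity theorem, applied after
multiplying by `s - 1` to remove the pole of `ζ`, extends this to `re s > 0`
(`etaPair_tsum_eq`). At a zero of `ζ` the paired series therefore sums to `0`; since single terms
tend to `0`, so do all partial sums of the unpaired series (`tendsto_eta_partial`).

For odd `q` one has `(-1) ^ (m q - 1) = (-1) ^ (m - 1)`, so the complex series with terms
`(-1) ^ (m q - 1) (m q) ^ (-s)` is `q ^ (-s)` times the eta series. Its real and imaginary parts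
are, up to sign, the two series of the theorem.
-/

open Filter Finset

/-- The sum of the terms of index `2k+1` and `2k+2` in the Dirichlet eta series
`∑_{m ≥ 1} (-1) ^ (m - 1) m ^ (-s)`. -/
noncomputable def etaPair (k : ℕ) (s : ℂ) : ℂ :=
  ((2 * k + 1 : ℕ) : ℂ) ^ (-s) - ((2 * k + 2 : ℕ) : ℂ) ^ (-s)

lemma norm_etaPair_le (k : ℕ) {s : ℂ} (hs : 0 < s.re) :
    ‖etaPair k s‖ ≤ ‖s‖ * ((k + 1 : ℕ) : ℝ) ^ (-s.re - 1) := by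
  have hs0 : -s ≠ 0 := by
    intro h
    rw [neg_eq_zero] at h
    simp [h] at hs
  have key := Convex.norm_image_sub_le_of_norm_hasDerivWithin_le
    (f := fun t : ℝ => (t : ℂ) ^ (-s)) (f' := fun t : ℝ => (-s) * (t : ℂ) ^ (-s - 1))
    (s := Set.Ici ((k + 1 : ℕ) : ℝ)) (x := ((2 * k + 2 : ℕ) : ℝ)) (y := ((2 * k + 1 : ℕ) : ℝ))
    (C := ‖s‖ * ((k + 1 : ℕ) : ℝ) ^ (-s.re - 1)) ?_ ?_ (convex_Ici _) ?_ ?_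
  · have e : ‖((2 * k + 1 : ℕ) : ℝ) - ((2 * k + 2 : ℕ) : ℝ)‖ = 1 := by
      push_cast
      rw [show (2 * (k : ℝ) + 1 - (2 * k + 2)) = -1 by ring]
      simp
    rw [e, mul_one] at key
    simpa [etaPair] using key
  · intro t ht
    have : 0 < t := lt_of_lt_of_le (by positivity) ht
    exact (hasDerivAt_ofReal_cpow_const this.ne' hs0).hasDerivWithinAt
  · intro t ht
    have hk : (0 : ℝ) < ((k + 1 : ℕ) : ℝ) := by positivity
    have h0 : 0 < t := lt_of_lt_of_le hk ht
    rw [norm_mul, norm_neg, Complex.norm_cpow_eq_rpow_re_of_pos h0]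
    refine mul_le_mul_of_nonneg_left ?_ (norm_nonneg _)
    simp only [Complex.sub_re, Complex.neg_re, Complex.one_re]
    exact Real.rpow_le_rpow_of_nonpos hk ht (by linarith)
  · simp only [Set.mem_Ici, Nat.cast_le]
    omega
  · simp only [Set.mem_Ici, Nat.cast_le]
    omega

lemma summable_succ_rpow {δ : ℝ} (hδ : 0 < δ) (R : ℝ) :
    Summable fun k : ℕ => R * ((k + 1 : ℕ) : ℝ) ^ (-δ - 1) :=
  ((summable_nat_add_iff 1).2 (Real.summable_nat_rpow.2 (by linarith))).mul_left R

lemma summable_etaPair {s : ℂ} (hs : 0 < s.re) : Summable fun k => etaPair k s :=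
  Summable.of_norm_bounded (summable_succ_rpow hs ‖s‖) fun k => norm_etaPair_le k hs

lemma etaPair_tsum_of_one_lt_re {s : ℂ} (hs : 1 < s.re) :
    ∑' k, etaPair k s = (1 - 2 * 2 ^ (-s)) * riemannZeta s := by
  set a : ℕ → ℂ := fun n => ((n + 1 : ℕ) : ℂ) ^ (-s) with ha
  have hsum : Summable a := by
    have := (summable_nat_add_iff 1).2 (Complex.summable_one_div_nat_cpow.2 hs)
    simpa [ha, Complex.cpow_neg] using this
  have hz : riemannZeta s = ∑' n, a n := by
    rw [zeta_eq_tsum_one_div_nat_add_one_cpow hs]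
    simp [ha, Complex.cpow_neg]
  have he : Summable fun k => a (2 * k) :=
    hsum.comp_injective (mul_right_injective₀ two_ne_zero)
  have ho : Summable fun k => a (2 * k + 1) :=
    hsum.comp_injective ((add_left_injective 1).comp (mul_right_injective₀ two_ne_zero))
  have hodd : ∑' k, a (2 * k + 1) = 2 ^ (-s) * riemannZeta s := by
    rw [hz, ← tsum_mul_left]
    refine tsum_congr fun k => ?_
    have := Complex.natCast_mul_natCast_cpow 2 (k + 1) (-s)
    simp only [ha]
    rw [show 2 * k + 1 + 1 = 2 * (k + 1) by ring, Nat.cast_mul, this]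
    simp
  have h1 := tsum_even_add_odd he ho
  have h2 : ∑' k, etaPair k s = ∑' k, a (2 * k) - ∑' k, a (2 * k + 1) := by
    rw [← he.tsum_sub ho]
    rfl
  rw [h2]
  rw [← hz] at h1
  linear_combination h1 - 2 * hodd

/-- Analytic continuation of `etaPair_tsum_of_one_lt_re` to the half-plane `re s > 0`. -/
lemma etaPair_tsum_eq {s : ℂ} (hs : 0 < s.re) (hs1 : s ≠ 1) :
    ∑' k, etaPair k s = (1 - 2 * 2 ^ (-s)) * riemannZeta s := by
  -- A bounded convex region containing `s` and `2`, with `re` bounded away from `0`, so that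
  -- one summable majorant serves the whole region.
  set δ : ℝ := min (s.re / 2) 1 with hδ
  have hδ0 : 0 < δ := lt_min (by linarith) one_pos
  set R : ℝ := ‖s‖ + 3 with hR
  set U : Set ℂ := {z | δ < z.re} ∩ Metric.ball 0 R with hU
  have hUo : IsOpen U := (isOpen_lt continuous_const Complex.continuous_re).inter Metric.isOpen_ball
  have hUc : Convex ℝ U := (convex_halfSpace_re_gt δ).inter (convex_ball 0 R)
  have hsU : s ∈ U := by
    have h1 : δ < s.re := (min_le_left _ _).trans_lt (by linarith)
    refine ⟨h1, ?_⟩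
    rw [mem_ball_zero_iff]
    linarith
  have h2U : (2 : ℂ) ∈ U := by
    have h1 : δ < (2 : ℂ).re := (min_le_right _ _).trans_lt (by norm_num)
    refine ⟨h1, ?_⟩
    rw [mem_ball_zero_iff]
    have := norm_nonneg s
    norm_num
    linarith
  have hG : DifferentiableOn ℂ (fun z => ∑' k, etaPair k z) U := by
    refine Complex.differentiableOn_tsum_of_summable_norm (summable_succ_rpow hδ0 R) ?_ hUo ?_
    · intro k
      refine Differentiable.differentiableOn ?_
      unfold etaPair
      refine Differentiable.sub ?_ ?_
      · exact differentiable_neg.const_cpow (Or.inl (Nat.cast_ne_zero.2 (by omega)))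
      · exact differentiable_neg.const_cpow (Or.inl (Nat.cast_ne_zero.2 (by omega)))
    · intro k z hz
      have hzδ : δ < z.re := hz.1
      have hzR : ‖z‖ < R := mem_ball_zero_iff.1 hz.2
      refine (norm_etaPair_le k (hδ0.trans hzδ)).trans ?_
      refine mul_le_mul hzR.le ?_ (by positivity) (by positivity)
      refine Real.rpow_le_rpow_of_exponent_le ?_ (by linarith)
      exact_mod_cast Nat.succ_pos k
  have hF1 : AnalyticOnNhd ℂ (fun z => (z - 1) * ∑' k, etaPair k z) U :=
    (((differentiable_id.sub_const 1).differentiableOn).mul hG).analyticOnNhd hUo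
  have hF2 : AnalyticOnNhd ℂ (fun z => (1 - 2 * 2 ^ (-z)) * riemannZeta₁ z) U := by
    refine DifferentiableOn.analyticOnNhd (Differentiable.differentiableOn ?_) hUo
    refine Differentiable.mul ?_ differentiable_riemannZeta₁
    have : Differentiable ℂ fun z : ℂ => (2 : ℂ) ^ (-z) :=
      differentiable_neg.const_cpow (Or.inl two_ne_zero)
    fun_prop
  have hev : (fun z => (z - 1) * ∑' k, etaPair k z) =ᶠ[nhds 2]
      fun z => (1 - 2 * 2 ^ (-z)) * riemannZeta₁ z := by
    have : {z : ℂ | 1 < z.re} ∈ nhds (2 : ℂ) :=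
      (isOpen_lt continuous_const Complex.continuous_re).mem_nhds (by norm_num)
    filter_upwards [this] with z hz
    have hz1 : z ≠ 1 := by
      rintro rfl
      simp at hz
    have hz1' : z - 1 ≠ 0 := sub_ne_zero.2 hz1
    rw [etaPair_tsum_of_one_lt_re hz, riemannZeta_eq_inv_sub_mul hz1]
    field_simp
  have h := hF1.eqOn_of_preconnected_of_eventuallyEq hF2 hUc.isPreconnected h2U hev hsU
  have hs1' : s - 1 ≠ 0 := sub_ne_zero.2 hs1
  rw [riemannZeta_eq_inv_sub_mul hs1]
  field_simp
  simpa [mul_comm] using h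

lemma tendsto_of_tendsto_even_odd {f : ℕ → ℂ} {l : Filter ℂ}
    (he : Tendsto (fun n => f (2 * n)) atTop l)
    (ho : Tendsto (fun n => f (2 * n + 1)) atTop l) : Tendsto f atTop l := by
  intro V hV
  obtain ⟨A, hA⟩ := mem_atTop_sets.1 (he hV)
  obtain ⟨B, hB⟩ := mem_atTop_sets.1 (ho hV)
  refine mem_atTop_sets.2 ⟨2 * A + 2 * B, fun n hn => ?_⟩
  obtain ⟨k, rfl | rfl⟩ := Nat.even_or_odd' n
  · exact hA k (by omega)
  · exact hB k (by omega)

/-- At a zero of `ζ` in the half-plane `re s > 0`, the Dirichlet eta series converges to `0`. -/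
lemma tendsto_eta_partial {s : ℂ} (hs : 0 < s.re) (hs1 : s ≠ 1) (hz : riemannZeta s = 0) :
    Tendsto (fun n : ℕ => ∑ m ∈ Finset.Icc 1 n, (-1 : ℂ) ^ (m - 1) * (m : ℂ) ^ (-s))
      atTop (nhds 0) := by
  have heq : ∀ n : ℕ, ∑ m ∈ Finset.Icc 1 (2 * n), (-1 : ℂ) ^ (m - 1) * (m : ℂ) ^ (-s)
      = ∑ k ∈ Finset.range n, etaPair k s := by
    intro n
    induction n with
    | zero => simp
    | succ n ih =>
      rw [Finset.sum_range_succ, ← ih, show 2 * (n + 1) = 2 * n + 1 + 1 by ring,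
        Finset.sum_Icc_succ_top (by omega), Finset.sum_Icc_succ_top (by omega)]
      simp [etaPair, pow_succ, pow_mul]
      ring_nf
  have he : Tendsto (fun n : ℕ => ∑ m ∈ Finset.Icc 1 (2 * n), (-1 : ℂ) ^ (m - 1) * (m : ℂ) ^ (-s))
      atTop (nhds 0) := by
    simp_rw [heq]
    have := (summable_etaPair hs).hasSum.tendsto_sum_nat
    rwa [etaPair_tsum_eq hs hs1, hz, mul_zero] at this
  refine tendsto_of_tendsto_even_odd he ?_
  have hterm : Tendsto (fun n : ℕ => ((2 * n + 1 : ℕ) : ℂ) ^ (-s)) atTop (nhds 0) := by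
    rw [tendsto_zero_iff_norm_tendsto_zero]
    have h1 : Tendsto (fun n : ℕ => ((2 * n + 1 : ℕ) : ℝ) ^ (-s.re)) atTop (nhds 0) := by
      refine (tendsto_rpow_neg_atTop hs).comp (tendsto_natCast_atTop_atTop.comp ?_)
      exact tendsto_atTop_mono (fun n => (by omega : n ≤ 2 * n + 1)) tendsto_id
    refine h1.congr fun n => ?_
    rw [Complex.norm_natCast_cpow_of_pos (by omega), Complex.neg_re]
  have := he.add hterm
  rw [add_zero] at this
  refine this.congr fun n => ?_
  rw [Finset.sum_Icc_succ_top (by omega)]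
  simp [pow_mul]

/-- Polar form of `n ^ (-(x + iy))`. -/
lemma natCast_cpow_neg_re_im {n : ℕ} (hn : 0 < n) (x y : ℝ) :
    ((n : ℂ) ^ (-((x : ℂ) + (y : ℂ) * Complex.I))).re
        = (n : ℝ) ^ (-x) * Real.cos (y * Real.log n) ∧
    ((n : ℂ) ^ (-((x : ℂ) + (y : ℂ) * Complex.I))).im
        = -((n : ℝ) ^ (-x) * Real.sin (y * Real.log n)) := by
  have hn' : (0 : ℝ) < n := Nat.cast_pos.2 hn
  rw [Complex.cpow_def_of_ne_zero (Nat.cast_ne_zero.2 hn.ne'), Complex.natCast_log.symm,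
    Complex.exp_re, Complex.exp_im, Real.rpow_def_of_pos hn']
  have e1 : ((Real.log n : ℂ) * -((x : ℂ) + (y : ℂ) * Complex.I)).re = Real.log n * -x := by
    rw [Complex.re_ofReal_mul]
    simp
  have e2 : ((Real.log n : ℂ) * -((x : ℂ) + (y : ℂ) * Complex.I)).im = -(y * Real.log n) := by
    rw [Complex.im_ofReal_mul]
    simp [mul_comm]
  rw [e1, e2, Real.cos_neg, Real.sin_neg]
  exact ⟨rfl, by ring⟩

theorem stmt_2 (x y : ℝ) (hx0 : 0 < x) (hx1 : x < 1)
    (hz : riemannZeta ((x : ℂ) + (y : ℂ) * Complex.I) = 0)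
    (q : ℕ) (hq : Odd q) (hqpos : 0 < q) :
    Tendsto (fun n : ℕ => ∑ m ∈ Finset.Icc 1 n,
        (-1 : ℝ) ^ (m * q - 1) * ((m * q : ℕ) : ℝ) ^ (-x) * Real.cos (y * Real.log (m * q)))
      atTop (nhds 0) ∧
    Tendsto (fun n : ℕ => ∑ m ∈ Finset.Icc 1 n,
        (-1 : ℝ) ^ (m * q - 1) * ((m * q : ℕ) : ℝ) ^ (-x) * Real.sin (y * Real.log (m * q)))
      atTop (nhds 0) := by
  set s : ℂ := (x : ℂ) + (y : ℂ) * Complex.I with hs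
  have hre : s.re = x := by simp [hs]
  have hs1 : s ≠ 1 := by
    intro h
    rw [h, Complex.one_re] at hre
    linarith
  have hsign : ∀ m : ℕ, 1 ≤ m → (-1 : ℝ) ^ (m * q - 1) = (-1) ^ (m - 1) := by
    intro m hm
    obtain ⟨r, rfl⟩ := hq
    obtain ⟨j, rfl⟩ := Nat.exists_eq_add_of_le hm
    rw [show (1 + j) * (2 * r + 1) - 1 = 2 * ((1 + j) * r) + j by
      rw [Nat.sub_eq_iff_eq_add (by nlinarith)]; ring]
    simp [pow_add, pow_mul]
  have hT : Tendsto (fun n : ℕ => ∑ m ∈ Finset.Icc 1 n,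
      (((-1 : ℝ) ^ (m * q - 1) : ℝ) : ℂ) * ((m * q : ℕ) : ℂ) ^ (-s)) atTop (nhds 0) := by
    have := (tendsto_eta_partial (by rwa [hre]) hs1 hz).mul_const ((q : ℂ) ^ (-s))
    rw [zero_mul] at this
    refine this.congr fun n => ?_
    rw [Finset.sum_mul]
    refine Finset.sum_congr rfl fun m hm => ?_
    rw [hsign m (Finset.mem_Icc.1 hm).1, Nat.cast_mul, Complex.natCast_mul_natCast_cpow]
    push_cast
    ring
  constructor
  · have h := (Complex.continuous_re.tendsto 0).comp hT
    rw [Complex.zero_re] at h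
    refine h.congr fun n => ?_
    simp only [Function.comp_apply, Complex.re_sum]
    refine Finset.sum_congr rfl fun m hm => ?_
    rw [Complex.re_ofReal_mul,
      (natCast_cpow_neg_re_im (Nat.mul_pos (Finset.mem_Icc.1 hm).1 hqpos) x y).1, Nat.cast_mul,
      mul_assoc]
  · have h := ((Complex.continuous_im.tendsto 0).comp hT).neg
    rw [Complex.zero_im, neg_zero] at h
    refine h.congr fun n => ?_
    simp only [Function.comp_apply, Complex.im_sum]
    rw [← Finset.sum_neg_distrib]
    refine Finset.sum_congr rfl fun m hm => ?_
    rw [Complex.im_ofReal_mul,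
      (natCast_cpow_neg_re_im (Nat.mul_pos (Finset.mem_Icc.1 hm).1 hqpos) x y).2, Nat.cast_mul]
    ring
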